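/- Let (M, g) be a compact Riemannian manifold, N ⊂ M a compact subset, D ⊂ N compact, and r > 0. Define f(x) = dist_g0(x, D) for a second metric g0 = e^(2φ)g conformal to g. Then ∫_0^r H^{n−1}_g(f^{−1}(t) ∩ Int N) dt ≤ (H^n_{g0}(f^{−1}((0,r)) ∩ N))^(1/n) · (H^n_g(f^{−1}((0,r)) ∩ N))^((n−1)/n). -/

import Mathlib

open MeasureTheory

/-!
Although `g` and `g₀` are merely infinitesimally proportional, for every `l > 1` the space splits
into countably many measurable pieces on which the identity from `g` to `g₀` is bi-Lipschitz with
distortion at most `l`: near each point the ratio of the distances lies between `c` and `l c` for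
some rational `c`, and one sorts points by `c` and by the scale at which this holds. On a piece
`S`, the function `f` is `l c`-Lipschitz for `g`, so Eilenberg's inequality (which has constant `1`
for the unnormalized Hausdorff measures `μH`) bounds the integral of its fibers by
`l c H^n_g(S) ≤ l H^n_{g₀}(S)^(1/n) H^n_g(S)^((n-1)/n)`, because `c^n H^n_g(S) ≤ H^n_{g₀}(S)`.
Hölder's inequality for sums adds up the pieces, and `l` tends to `1`.
-/

noncomputable section

open Filter Function Metric Set Topology
open scoped NNReal ENNReal

section UpperIntegral

variable {α : Type*} [MeasurableSpace α] {μ : Measure α} {f g : α → ℝ≥0∞}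

/-- The upper integral of `f`: the infimum of the integrals of its measurable majorants. For
non-measurable `f`, Mathlib's `∫⁻` is a lower integral, which is not countably subadditive; the
upper integral is. -/
def upperLIntegral (μ : Measure α) (f : α → ℝ≥0∞) : ℝ≥0∞ :=
  ⨅ (h : α → ℝ≥0∞) (_ : Measurable h) (_ : f ≤ h), ∫⁻ a, h a ∂μ

theorem upperLIntegral_le_lintegral (hg : Measurable g) (hfg : f ≤ g) :
    upperLIntegral μ f ≤ ∫⁻ a, g a ∂μ :=
  iInf₂_le_of_le g hg (iInf_le _ hfg)

theorem lintegral_le_upperLIntegral : ∫⁻ a, f a ∂μ ≤ upperLIntegral μ f :=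
  le_iInf₂ fun _ _ => le_iInf fun hfh => lintegral_mono hfh

theorem upperLIntegral_mono (hfg : f ≤ g) : upperLIntegral μ f ≤ upperLIntegral μ g :=
  le_iInf₂ fun _ hh => le_iInf fun hgh => upperLIntegral_le_lintegral hh (hfg.trans hgh)

theorem exists_measurable_ge_lintegral_eq_upperLIntegral (μ : Measure α) (f : α → ℝ≥0∞) :
    ∃ h, Measurable h ∧ f ≤ h ∧ ∫⁻ a, h a ∂μ = upperLIntegral μ f := by
  rcases eq_or_ne (upperLIntegral μ f) ∞ with htop | htop
  · exact ⟨fun _ => ∞, measurable_const, fun _ => le_top, le_antisymm (le_top.trans_eq htop.symm)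
      (upperLIntegral_le_lintegral measurable_const fun _ => le_top)⟩
  obtain ⟨c, -, hc, hc_lim⟩ := exists_seq_strictAnti_tendsto' htop.lt_top
  have hmajorant (k : ℕ) : ∃ h, Measurable h ∧ f ≤ h ∧ ∫⁻ a, h a ∂μ < c k := by
    simpa only [upperLIntegral, iInf_lt_iff, exists_prop] using (hc k).1
  choose h hh hfh hhc using hmajorant
  have hinf : Measurable fun a => ⨅ k, h k a := .iInf hh
  have hf_inf : f ≤ fun a => ⨅ k, h k a := fun a => le_iInf fun k => hfh k a
  refine ⟨_, hinf, hf_inf, le_antisymm ?_ (upperLIntegral_le_lintegral hinf hf_inf)⟩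
  exact ge_of_tendsto' hc_lim fun k =>
    (lintegral_mono fun a => iInf_le (fun k => h k a) k).trans (hhc k).le

theorem upperLIntegral_tsum_le {ι : Type*} [Countable ι] (f : ι → α → ℝ≥0∞) :
    upperLIntegral μ (fun a => ∑' i, f i a) ≤ ∑' i, upperLIntegral μ (f i) := by
  choose h hh hfh hint using fun i => exists_measurable_ge_lintegral_eq_upperLIntegral μ (f i)
  calc upperLIntegral μ (fun a => ∑' i, f i a)
      ≤ ∫⁻ a, ∑' i, h i a ∂μ :=
        upperLIntegral_le_lintegral (.tsum hh) fun a =>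
          ENNReal.tsum_le_tsum fun i => hfh i a
    _ = ∑' i, upperLIntegral μ (f i) := by
        simp only [lintegral_tsum fun i => (hh i).aemeasurable, hint]

theorem upperLIntegral_liminf_le (f : ℕ → α → ℝ≥0∞) :
    upperLIntegral μ (fun a => liminf (fun k => f k a) atTop) ≤
      liminf (fun k => upperLIntegral μ (f k)) atTop := by
  choose h hh hfh hint using fun k => exists_measurable_ge_lintegral_eq_upperLIntegral μ (f k)
  calc upperLIntegral μ (fun a => liminf (fun k => f k a) atTop)
      ≤ ∫⁻ a, liminf (fun k => h k a) atTop ∂μ :=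
        upperLIntegral_le_lintegral (.liminf hh) fun a =>
          liminf_le_liminf (f := atTop) (.of_forall fun k => hfh k a)
    _ ≤ liminf (fun k => upperLIntegral μ (f k)) atTop := by
        simpa only [hint] using lintegral_liminf_le (μ := μ) (u := atTop) hh

theorem upperLIntegral_indicator_const_le (s : Set α) (c : ℝ≥0∞) :
    upperLIntegral μ (s.indicator fun _ => c) ≤ c * μ s := by
  have hmeas := measurableSet_toMeasurable μ s
  calc upperLIntegral μ (s.indicator fun _ => c)
      ≤ ∫⁻ a, (toMeasurable μ s).indicator (fun _ => c) a ∂μ :=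
        upperLIntegral_le_lintegral (measurable_const.indicator hmeas)
          (indicator_le_indicator_of_subset (subset_toMeasurable μ s) fun _ => zero_le)
    _ = c * μ s := by rw [lintegral_indicator_const hmeas, measure_toMeasurable]

end UpperIntegral

theorem one_div_add_sub_one_div {s : ℝ} (hs : s ≠ 0) : 1 / s + (s - 1) / s = 1 := by
  rw [← add_div, add_sub_cancel, div_self hs]

theorem tsum_rpow_mul_rpow_le {ι : Type*} (a b : ι → ℝ≥0∞) {p q : ℝ} (hp : 0 ≤ p) (hq : 0 ≤ q)
    (hpq : p + q = 1) :
    ∑' i, a i ^ p * b i ^ q ≤ (∑' i, a i) ^ p * (∑' i, b i) ^ q := by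
  let _ : MeasurableSpace ι := ⊤
  simpa only [lintegral_count] using
    ENNReal.lintegral_mul_norm_pow_le (μ := Measure.count) (f := a) (g := b)
      measurable_from_top.aemeasurable measurable_from_top.aemeasurable hp hq hpq

theorem le_of_forall_one_lt_le_coe_mul {a b : ℝ≥0∞} (h : ∀ l : ℝ≥0, 1 < l → a ≤ l * b) :
    a ≤ b := by
  have hlim : Tendsto (fun l : ℝ≥0 => (l : ℝ≥0∞) * b) (𝓝[>] 1) (𝓝 (1 * b)) :=
    ENNReal.Tendsto.mul_const
      ((ENNReal.continuous_coe.tendsto 1).mono_left nhdsWithin_le_nhds) (.inl one_ne_zero)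
  exact one_mul b ▸ ge_of_tendsto hlim (eventually_mem_nhdsWithin.mono h)

theorem exists_nnrat_one_lt_mul_lt_div {ρ : ℝ} (hρ : 0 < ρ) {l : ℝ≥0} (hl : 1 < l) :
    ∃ q : ℚ≥0, 1 < ((q : ℝ≥0) : ℝ) * ρ ∧ ρ < ((l / q : ℝ≥0) : ℝ) := by
  have hl' : (1 : ℝ) < l := by exact_mod_cast hl
  obtain ⟨q, hq_gt, hq_lt⟩ := exists_rat_btwn (div_lt_div_of_pos_right hl' hρ)
  have hq : (0 : ℝ) < q := lt_trans (by positivity) hq_gt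
  lift q to ℚ≥0 using by exact_mod_cast hq.le
  rw [div_lt_iff₀ hρ] at hq_gt
  rw [lt_div_iff₀ hρ] at hq_lt
  push_cast at hq hq_gt hq_lt ⊢
  exact ⟨q, hq_gt, (lt_div_iff₀ hq).2 (by linarith)⟩

theorem inter_fiber_eq_empty {α β : Type*} {f : α → β} {S : Set α} {t : β} (ht : t ∉ f '' S) :
    S ∩ f ⁻¹' {t} = ∅ :=
  eq_empty_of_forall_notMem fun x hx => ht ⟨x, hx.1, hx.2⟩

section Eilenberg

variable {X : Type*} [EMetricSpace X] {f : X → ℝ} {L : ℝ≥0} {S : Set X} {d : ℝ}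

theorem volume_image_le_mul_ediam (hf : LipschitzOnWith L f S) :
    volume (f '' S) ≤ L * ediam S :=
  (Real.volume_le_diam _).trans (by simpa using hf.holderOnWith.ediam_image_le)

theorem ediam_inter_fiber_rpow_le (hd : 0 < d) (f : X → ℝ) (S : Set X) (t : ℝ) :
    ediam (S ∩ f ⁻¹' {t}) ^ d ≤ (f '' S).indicator (fun _ => ediam S ^ d) t := by
  by_cases ht : t ∈ f '' S
  · rw [indicator_of_mem ht]
    exact ENNReal.rpow_le_rpow (ediam_mono inter_subset_left) hd.le
  · simp [inter_fiber_eq_empty ht, ENNReal.zero_rpow_of_pos hd]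

theorem upperLIntegral_tsum_ediam_inter_fiber_le (hd : 0 < d) (hf : LipschitzOnWith L f S)
    {ι : Type*} [Countable ι] {T : ι → Set X} (hT : ∀ i, T i ⊆ S) :
    upperLIntegral volume (fun t => ∑' i, ediam (T i ∩ f ⁻¹' {t}) ^ d) ≤
      L * ∑' i, ediam (T i) ^ (d + 1) := by
  have hpiece (i : ι) : upperLIntegral volume (fun t => ediam (T i ∩ f ⁻¹' {t}) ^ d) ≤
      L * ediam (T i) ^ (d + 1) :=
    calc upperLIntegral volume (fun t => ediam (T i ∩ f ⁻¹' {t}) ^ d)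
        ≤ ediam (T i) ^ d * volume (f '' T i) :=
          (upperLIntegral_mono (ediam_inter_fiber_rpow_le hd f (T i))).trans
            (upperLIntegral_indicator_const_le _ _)
      _ ≤ ediam (T i) ^ d * (L * ediam (T i)) := by
          gcongr
          exact volume_image_le_mul_ediam (hf.mono (hT i))
      _ = L * ediam (T i) ^ (d + 1) := by
          rw [ENNReal.rpow_add_of_nonneg _ _ hd.le zero_le_one, ENNReal.rpow_one, mul_left_comm]
  rw [← ENNReal.tsum_mul_left]
  exact (upperLIntegral_tsum_le _).trans (ENNReal.tsum_le_tsum hpiece)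

variable [MeasurableSpace X] [BorelSpace X]

theorem exists_iUnion_eq_tsum_ediam_rpow_le (hd : 0 < d) (hS : μH[d] S ≠ ∞) {ε : ℝ≥0∞}
    (hε : 0 < ε) :
    ∃ T : ℕ → Set X, ⋃ i, T i = S ∧ (∀ i, ediam (T i) ≤ ε) ∧
      ∑' i, ediam (T i) ^ d ≤ μH[d] S + ε := by
  have hlt : (⨅ (T : ℕ → Set X) (_ : S ⊆ ⋃ i, T i) (_ : ∀ i, ediam (T i) ≤ ε),
      ∑' i, ⨆ _ : (T i).Nonempty, ediam (T i) ^ d) < μH[d] S + ε := by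
    refine lt_of_le_of_lt ?_ (ENNReal.lt_add_right hS hε.ne')
    rw [Measure.hausdorffMeasure_apply]
    exact le_iSup₂_of_le ε hε le_rfl
  simp only [iInf_lt_iff] at hlt
  obtain ⟨T, hST, hTε, hsum⟩ := hlt
  refine ⟨fun i => T i ∩ S, by rw [← iUnion_inter, inter_eq_right.2 hST],
    fun i => (ediam_mono inter_subset_left).trans (hTε i), ?_⟩
  refine (ENNReal.tsum_le_tsum fun i => ?_).trans hsum.le
  rcases (T i).eq_empty_or_nonempty with hempty | hne
  · simp [hempty, ENNReal.zero_rpow_of_pos hd]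
  · rw [iSup_pos hne]
    exact ENNReal.rpow_le_rpow (ediam_mono inter_subset_left) hd.le

theorem upperLIntegral_hausdorffMeasure_fiber_le_of_ne_top (hd : 0 < d)
    (hf : LipschitzOnWith L f S) (hS : μH[d + 1] S ≠ ∞) :
    upperLIntegral volume (fun t => μH[d] (S ∩ f ⁻¹' {t})) ≤ L * μH[d + 1] S := by
  have hε_lim : Tendsto (fun k : ℕ => ((k + 1 : ℕ) : ℝ≥0∞)⁻¹) atTop (𝓝 0) :=
    (tendsto_add_atTop_iff_nat 1).2 ENNReal.tendsto_inv_nat_nhds_zero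
  choose T hTS hTε hTsum using fun k : ℕ =>
    exists_iUnion_eq_tsum_ediam_rpow_le (by positivity) hS
      (ENNReal.inv_pos.2 (ENNReal.natCast_ne_top (k + 1)))
  have hfiber (t : ℝ) : μH[d] (S ∩ f ⁻¹' {t}) ≤
      liminf (fun k => ∑' i, ediam (T k i ∩ f ⁻¹' {t}) ^ d) atTop :=
    Measure.hausdorffMeasure_le_liminf_tsum d _ _ hε_lim (fun k i => T k i ∩ f ⁻¹' {t})
      (.of_forall fun k i => (ediam_mono inter_subset_left).trans (hTε k i))
      (.of_forall fun k => by rw [← iUnion_inter, hTS k])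
  have hcover (k : ℕ) :
      upperLIntegral volume (fun t => ∑' i, ediam (T k i ∩ f ⁻¹' {t}) ^ d) ≤
        L * (μH[d + 1] S + ((k + 1 : ℕ) : ℝ≥0∞)⁻¹) :=
    (upperLIntegral_tsum_ediam_inter_fiber_le hd hf
      fun i => hTS k ▸ subset_iUnion (T k) i).trans (by gcongr; exact hTsum k)
  have hlim : Tendsto (fun k : ℕ => L * (μH[d + 1] S + ((k + 1 : ℕ) : ℝ≥0∞)⁻¹)) atTop
      (𝓝 (L * (μH[d + 1] S + 0))) :=
    ENNReal.Tendsto.const_mul (tendsto_const_nhds.add hε_lim) (.inr ENNReal.coe_ne_top)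
  calc upperLIntegral volume (fun t => μH[d] (S ∩ f ⁻¹' {t}))
      ≤ liminf (fun k =>
          upperLIntegral volume (fun t => ∑' i, ediam (T k i ∩ f ⁻¹' {t}) ^ d)) atTop :=
        (upperLIntegral_mono hfiber).trans (upperLIntegral_liminf_le _)
    _ ≤ liminf (fun k : ℕ => L * (μH[d + 1] S + ((k + 1 : ℕ) : ℝ≥0∞)⁻¹)) atTop :=
        liminf_le_liminf (.of_forall hcover)
    _ = L * μH[d + 1] S := by rw [hlim.liminf_eq, add_zero]

theorem upperLIntegral_hausdorffMeasure_fiber_le (hd : 0 < d) (hf : LipschitzOnWith L f S) :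
    upperLIntegral volume (fun t => μH[d] (S ∩ f ⁻¹' {t})) ≤ L * μH[d + 1] S := by
  rcases ne_or_eq (μH[d + 1] S) ∞ with hS | hS
  · exact upperLIntegral_hausdorffMeasure_fiber_le_of_ne_top hd hf hS
  rcases eq_or_ne L 0 with rfl | hL
  · have hnull : volume (f '' S) = 0 := by simpa using volume_image_le_mul_ediam hf
    have hfiber : (fun t => μH[d] (S ∩ f ⁻¹' {t})) ≤ (f '' S).indicator fun _ => ∞ := by
      refine le_indicator (fun _ _ => le_top) fun t ht => ?_
      rw [inter_fiber_eq_empty ht, measure_empty]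
    simpa [hnull] using (upperLIntegral_mono hfiber).trans
      (upperLIntegral_indicator_const_le (μ := volume) (f '' S) ∞)
  · simp [hS, hL]

end Eilenberg

section BiLipschitz

variable {X Y : Type*} [EMetricSpace X] [MeasurableSpace X] [BorelSpace X] [EMetricSpace Y]
  [MeasurableSpace Y] [BorelSpace Y] {F : X → Y} {K L : ℝ≥0} {S : Set X} {s : ℝ}

theorem hausdorffMeasure_le_mul_image_of_antilipschitzWith_domRestrict (hs : 0 ≤ s)
    (hF : AntilipschitzWith K (S.domRestrict F)) :
    μH[s] S ≤ (K : ℝ≥0∞) ^ s * μH[s] (F '' S) := by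
  have hle := hF.le_hausdorffMeasure_image hs univ
  rwa [← isometry_subtype_coe.hausdorffMeasure_image (.inl hs) univ, image_univ, image_univ,
    Subtype.range_coe, range_domRestrict] at hle

theorem upperLIntegral_hausdorffMeasure_fiber_le_of_biLipschitz (hs : 1 < s)
    (hFK : AntilipschitzWith K (S.domRestrict F)) (hFL : LipschitzOnWith L F S)
    {u : Y → ℝ} (hu : LipschitzWith 1 u) :
    upperLIntegral volume (fun t => μH[s - 1] (S ∩ (u ∘ F) ⁻¹' {t})) ≤
      (L * K : ℝ≥0) * (μH[s] (F '' S) ^ (1 / s) * μH[s] S ^ ((s - 1) / s)) := by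
  have hs0 : 0 < s := by linarith
  have huF : LipschitzOnWith L (u ∘ F) S := by simpa using hu.comp_lipschitzOnWith hFL
  have hsplit : μH[s] S = μH[s] S ^ (1 / s) * μH[s] S ^ ((s - 1) / s) := by
    rw [← ENNReal.rpow_add_of_nonneg _ _ (by positivity) (div_nonneg (by linarith) hs0.le),
      one_div_add_sub_one_div hs0.ne', ENNReal.rpow_one]
  have himage : μH[s] S ^ (1 / s) ≤ K * μH[s] (F '' S) ^ (1 / s) :=
    calc μH[s] S ^ (1 / s) ≤ ((K : ℝ≥0∞) ^ s * μH[s] (F '' S)) ^ (1 / s) := by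
          gcongr
          exact hausdorffMeasure_le_mul_image_of_antilipschitzWith_domRestrict hs0.le hFK
      _ = K * μH[s] (F '' S) ^ (1 / s) := by
          rw [ENNReal.mul_rpow_of_nonneg _ _ (by positivity), ← ENNReal.rpow_mul,
            mul_one_div_cancel hs0.ne', ENNReal.rpow_one]
  calc upperLIntegral volume (fun t => μH[s - 1] (S ∩ (u ∘ F) ⁻¹' {t}))
      ≤ L * μH[s] S := by
        simpa using upperLIntegral_hausdorffMeasure_fiber_le (sub_pos.2 hs) huF
    _ = L * (μH[s] S ^ (1 / s) * μH[s] S ^ ((s - 1) / s)) := by rw [← hsplit]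
    _ ≤ L * (K * μH[s] (F '' S) ^ (1 / s) * μH[s] S ^ ((s - 1) / s)) := by gcongr
    _ = (L * K : ℝ≥0) * (μH[s] (F '' S) ^ (1 / s) * μH[s] S ^ ((s - 1) / s)) := by
        push_cast
        ring

end BiLipschitz

section Decomposition

variable {X Y : Type*} [MetricSpace X] [MetricSpace Y] {F : X → Y} {K L : ℝ≥0} {S : Set X}

/-- The points at which `F` is bi-Lipschitz at scale `δ`: distances less than `δ` from the point
are contracted by a factor of at most `K` and expanded by a factor of at most `L`. -/
def biLipschitzAtScale (F : X → Y) (K L : ℝ≥0) (δ : ℝ) : Set X :=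
  {x | ∀ y, dist x y < δ →
    dist x y ≤ K * dist (F x) (F y) ∧ dist (F x) (F y) ≤ L * dist x y}

theorem isClosed_biLipschitzAtScale (hF : Continuous F) (K L : ℝ≥0) (δ : ℝ) :
    IsClosed (biLipschitzAtScale F K L δ) := by
  simp only [biLipschitzAtScale, ← not_le (b := dist _ _), ← or_iff_not_imp_left, ofPred_forall,
    ofPred_or, ofPred_and]
  exact isClosed_iInter fun y =>
    (isClosed_le (by fun_prop) (by fun_prop)).union
      ((isClosed_le (by fun_prop) (by fun_prop)).inter (isClosed_le (by fun_prop) (by fun_prop)))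

theorem biLipschitz_of_subset_biLipschitzAtScale_inter_ball {δ : ℝ} {z : X}
    (hS : S ⊆ biLipschitzAtScale F K L δ ∩ ball z (δ / 2)) :
    AntilipschitzWith K (S.domRestrict F) ∧ LipschitzOnWith L F S := by
  have hdist {x y : X} (hx : x ∈ S) (hy : y ∈ S) : dist x y < δ := by
    linarith [dist_triangle_right x y z, mem_ball.1 (hS hx).2, mem_ball.1 (hS hy).2]
  exact ⟨.of_le_mul_dist fun x y => ((hS x.2).1 y (hdist x.2 y.2)).1,
    .of_dist_le_mul fun x hx y hy => ((hS hx).1 y (hdist hx hy)).2⟩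

/-- `F` has conformal factor `ρ` at `x`, in the sense of metric derivatives: infinitesimally at
`x`, it scales distances by `ρ`. For the identity map from `(M, g)` to `(M, e^(2φ) g)`,
`ρ = e^φ`. -/
def HasConformalFactorAt (F : X → Y) (ρ : ℝ) (x : X) : Prop :=
  Tendsto (fun y => dist (F x) (F y) / dist x y) (𝓝[≠] x) (𝓝 ρ)

theorem HasConformalFactorAt.continuousAt {ρ : ℝ} {x : X} (hF : HasConformalFactorAt F ρ x) :
    ContinuousAt F x := by
  have hdist : Tendsto (fun y => dist x y) (𝓝[≠] x) (𝓝 0) :=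
    (dist_self x ▸ (by fun_prop : Continuous fun y => dist x y).tendsto x).mono_left
      nhdsWithin_le_nhds
  rw [continuousAt_iff_punctured_nhds, tendsto_iff_dist_tendsto_zero, ← mul_zero ρ]
  refine (Tendsto.mul hF hdist).congr' (eventually_mem_nhdsWithin.mono fun y hy => ?_)
  rw [div_mul_cancel₀ _ (dist_ne_zero.2 (Ne.symm hy)), dist_comm]

theorem HasConformalFactorAt.exists_mem_biLipschitzAtScale {ρ : ℝ} {x : X}
    (hF : HasConformalFactorAt F ρ x) (hK : 1 < K * ρ) (hL : ρ < L) :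
    ∃ k : ℕ, x ∈ biLipschitzAtScale F K L (1 / (k + 1)) := by
  have hev := ((Tendsto.const_mul (K : ℝ) hF).eventually_const_lt hK).and
    (Tendsto.eventually_lt_const hL hF)
  obtain ⟨ε, hε, hball⟩ := Metric.eventually_nhds_iff.1 (eventually_nhdsWithin_iff.1 hev)
  obtain ⟨k, hk⟩ := exists_nat_one_div_lt hε
  refine ⟨k, fun y hy => ?_⟩
  rcases eq_or_ne y x with rfl | hyx
  · simp
  have hpos : 0 < dist x y := dist_pos.2 hyx.symm
  obtain ⟨hlower, hupper⟩ := hball (dist_comm x y ▸ hy.trans hk) hyx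
  rw [← mul_div_assoc, one_lt_div hpos] at hlower
  rw [div_lt_iff₀ hpos] at hupper
  exact ⟨hlower.le, hupper.le⟩

theorem exists_measurable_partition_biLipschitz [SecondCountableTopology X] [MeasurableSpace X]
    [BorelSpace X] {ρ : X → ℝ} (hρ : ∀ x, 0 < ρ x) (hF : ∀ x, HasConformalFactorAt F (ρ x) x)
    {l : ℝ≥0} (hl : 1 < l) {A : Set X} (hA : MeasurableSet A) :
    ∃ P : ℕ → Set X, (∀ i, MeasurableSet (P i)) ∧ Pairwise (Disjoint on P) ∧ ⋃ i, P i = A ∧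
      ∀ i, ∃ K L : ℝ≥0, L * K ≤ l ∧ AntilipschitzWith K ((P i).domRestrict F) ∧
        LipschitzOnWith L F (P i) := by
  rcases isEmpty_or_nonempty X with hX | hX
  · exact ⟨fun _ => ∅, fun _ => .empty, fun _ _ _ => disjoint_bot_left, Subsingleton.elim _ _,
      fun _ => ⟨0, 0, by simp, fun x => isEmptyElim x, by simp⟩⟩
  have hcont : Continuous F := continuous_iff_continuousAt.2 fun x => (hF x).continuousAt
  -- For `q = 0` the piece has at most one point, which fits the value `l / 0 = 0`.
  let Q : ℚ≥0 × ℕ × ℕ → Set X := fun ⟨q, k, m⟩ =>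
    biLipschitzAtScale F q (l / q) (1 / (k + 1)) ∩
      ball (TopologicalSpace.denseSeq X m) (1 / (k + 1) / 2)
  have hQ_meas (j) : MeasurableSet (Q j) :=
    (isClosed_biLipschitzAtScale hcont _ _ _).measurableSet.inter measurableSet_ball
  have hQ_cover (x : X) : ∃ j, x ∈ Q j := by
    obtain ⟨q, hq, hq'⟩ := exists_nnrat_one_lt_mul_lt_div (hρ x) hl
    obtain ⟨k, hk⟩ := (hF x).exists_mem_biLipschitzAtScale hq hq'
    obtain ⟨m, hm⟩ := (TopologicalSpace.denseRange_denseSeq X).exists_dist_lt x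
      (by positivity : (0 : ℝ) < 1 / (k + 1) / 2)
    exact ⟨(q, k, m), hk, hm⟩
  obtain ⟨e, he⟩ := exists_surjective_nat (ℚ≥0 × ℕ × ℕ)
  have hQ_univ : ⋃ i, disjointed (Q ∘ e) i = univ :=
    iUnion_disjointed.trans ((he.iUnion_comp Q).trans (iUnion_eq_univ_iff.2 hQ_cover))
  exact ⟨fun i => A ∩ disjointed (Q ∘ e) i,
    fun i => hA.inter (.disjointed (fun i => hQ_meas (e i)) i),
    fun i j hij => (disjoint_disjointed (Q ∘ e) hij).mono inter_subset_right inter_subset_right,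
    by rw [← inter_iUnion, hQ_univ, inter_univ],
    fun i => ⟨(e i).1, l / (e i).1, mul_le_of_le_div₀ zero_le zero_le le_rfl,
      biLipschitz_of_subset_biLipschitzAtScale_inter_ball
        (inter_subset_right.trans (disjointed_subset (Q ∘ e) i))⟩⟩

end Decomposition

section Conformal

variable {X Y : Type*} [MetricSpace X] [SecondCountableTopology X] [MeasurableSpace X]
  [BorelSpace X] [MetricSpace Y] [MeasurableSpace Y] [BorelSpace Y] {F : X → Y} {ρ : X → ℝ}
  {u : Y → ℝ} {s : ℝ}

theorem upperLIntegral_hausdorffMeasure_fiber_le_of_conformal (hs : 1 < s)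
    (hF : MeasurableEmbedding F) (hρ : ∀ x, 0 < ρ x)
    (hconf : ∀ x, HasConformalFactorAt F (ρ x) x) (hu : LipschitzWith 1 u) {A : Set X}
    (hA : MeasurableSet A) :
    upperLIntegral volume (fun t => μH[s - 1] (A ∩ (u ∘ F) ⁻¹' {t})) ≤
      μH[s] (F '' A) ^ (1 / s) * μH[s] A ^ ((s - 1) / s) := by
  refine le_of_forall_one_lt_le_coe_mul fun l hl => ?_
  obtain ⟨P, hP_meas, hP_disj, rfl, hP_biLip⟩ :=
    exists_measurable_partition_biLipschitz hρ hconf hl hA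
  have hsum : ∑' i, μH[s] (P i) = μH[s] (⋃ i, P i) := (measure_iUnion hP_disj hP_meas).symm
  have hsum_image : ∑' i, μH[s] (F '' P i) = μH[s] (F '' ⋃ i, P i) := by
    rw [image_iUnion, measure_iUnion
      (fun i j hij => (disjoint_image_iff hF.injective).2 (hP_disj hij))
      fun i => hF.measurableSet_image.2 (hP_meas i)]
  have hpiece (i : ℕ) : upperLIntegral volume (fun t => μH[s - 1] (P i ∩ (u ∘ F) ⁻¹' {t})) ≤
      l * (μH[s] (F '' P i) ^ (1 / s) * μH[s] (P i) ^ ((s - 1) / s)) := by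
    obtain ⟨K, L, hLK, hFK, hFL⟩ := hP_biLip i
    refine (upperLIntegral_hausdorffMeasure_fiber_le_of_biLipschitz hs hFK hFL hu).trans ?_
    gcongr
  calc upperLIntegral volume (fun t => μH[s - 1] ((⋃ i, P i) ∩ (u ∘ F) ⁻¹' {t}))
      ≤ upperLIntegral volume (fun t => ∑' i, μH[s - 1] (P i ∩ (u ∘ F) ⁻¹' {t})) :=
        upperLIntegral_mono fun t => by
          rw [iUnion_inter]
          exact measure_iUnion_le _
    _ ≤ ∑' i, l * (μH[s] (F '' P i) ^ (1 / s) * μH[s] (P i) ^ ((s - 1) / s)) :=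
        (upperLIntegral_tsum_le _).trans (ENNReal.tsum_le_tsum hpiece)
    _ ≤ l * (μH[s] (F '' ⋃ i, P i) ^ (1 / s) * μH[s] (⋃ i, P i) ^ ((s - 1) / s)) := by
        rw [ENNReal.tsum_mul_left, ← hsum, ← hsum_image]
        gcongr
        exact tsum_rpow_mul_rpow_le _ _ (by positivity) (div_nonneg (by linarith) (by linarith))
          (one_div_add_sub_one_div (by linarith))

theorem stmt_7_general (hs : 1 < s) (hF : MeasurableEmbedding F) (hρ : ∀ x, 0 < ρ x)
    (hconf : ∀ x, HasConformalFactorAt F (ρ x) x) (hu : LipschitzWith 1 u) {T : Set ℝ}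
    (hT : MeasurableSet T) {N : Set X} (hN : MeasurableSet N) :
    ∫⁻ t in T, μH[s - 1] ((u ∘ F) ⁻¹' {t} ∩ N) ≤
      μH[s] (F '' ((u ∘ F) ⁻¹' T ∩ N)) ^ (1 / s) *
        μH[s] ((u ∘ F) ⁻¹' T ∩ N) ^ ((s - 1) / s) := by
  have hA : MeasurableSet ((u ∘ F) ⁻¹' T ∩ N) :=
    ((hu.continuous.measurable.comp hF.measurable) hT).inter hN
  have hfiber (t : ℝ) (ht : t ∈ T) :
      (u ∘ F) ⁻¹' {t} ∩ N ⊆ (u ∘ F) ⁻¹' T ∩ N ∩ (u ∘ F) ⁻¹' {t} :=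
    fun _ ⟨hxt, hxN⟩ => ⟨⟨preimage_mono (singleton_subset_iff.2 ht) hxt, hxN⟩, hxt⟩
  calc ∫⁻ t in T, μH[s - 1] ((u ∘ F) ⁻¹' {t} ∩ N)
      ≤ ∫⁻ t in T, μH[s - 1] ((u ∘ F) ⁻¹' T ∩ N ∩ (u ∘ F) ⁻¹' {t}) :=
        setLIntegral_mono' hT fun t ht => measure_mono (hfiber t ht)
    _ ≤ upperLIntegral volume (fun t => μH[s - 1] ((u ∘ F) ⁻¹' T ∩ N ∩ (u ∘ F) ⁻¹' {t})) :=
        (setLIntegral_le_lintegral _ _).trans lintegral_le_upperLIntegral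
    _ ≤ _ := upperLIntegral_hausdorffMeasure_fiber_le_of_conformal hs hF hρ hconf hu hA

end Conformal

end

/-- the length-area estimate.  `M` carries two conformal metrics `g`
(inducing the same topology) and `g0`; conformality is expressed by the metric
derivative relation `d_{g0}(x,y)/d_g(x,y) → e^{φ(x)}` as `y → x` for a continuous
function `φ`.  With `f = dist_{g0}(·, D)` for a compact `D ⊆ N` and `N` compact,
`∫_0^r H^{n−1}_g(f⁻¹(t) ∩ Int N) dt
  ≤ (H^n_{g0}(f⁻¹((0,r)) ∩ N))^(1/n) · (H^n_g(f⁻¹((0,r)) ∩ N))^((n−1)/n)`. -/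
theorem stmt_7 (n : ℕ) (hn : 2 ≤ n) {M : Type*} [ms : MeasurableSpace M]
    (g g0 : MetricSpace M)
    (htop : g.toUniformSpace.toTopologicalSpace = g0.toUniformSpace.toTopologicalSpace)
    (hcompact : @CompactSpace M g.toUniformSpace.toTopologicalSpace)
    (hborel : @BorelSpace M g.toUniformSpace.toTopologicalSpace ms)
    (hborel0 : @BorelSpace M g0.toUniformSpace.toTopologicalSpace ms)
    (φ : M → ℝ)
    (hφ : @Continuous M ℝ g.toUniformSpace.toTopologicalSpace _ φ)
    (hconf : ∀ x : M, Filter.Tendsto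
      (fun y => (@dist M g0.toPseudoMetricSpace.toDist x y) /
        (@dist M g.toPseudoMetricSpace.toDist x y))
      (@nhdsWithin M g.toUniformSpace.toTopologicalSpace x {x}ᶜ)
      (nhds (Real.exp (φ x))))
    (N D : Set M)
    (hN : @IsCompact M g.toUniformSpace.toTopologicalSpace N)
    (hD : @IsCompact M g.toUniformSpace.toTopologicalSpace D)
    (hDN : D ⊆ N) (r : ℝ) (hr : 0 < r) :
    (∫⁻ t in Set.Ioo (0 : ℝ) r,
        @Measure.hausdorffMeasure M g.toEMetricSpace ms hborel ((n : ℝ) - 1)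
          ((fun x => @Metric.infDist M g0.toPseudoMetricSpace x D) ⁻¹' {t} ∩
            @interior M g.toUniformSpace.toTopologicalSpace N)) ≤
      (@Measure.hausdorffMeasure M g0.toEMetricSpace ms hborel0 (n : ℝ)
          ((fun x => @Metric.infDist M g0.toPseudoMetricSpace x D) ⁻¹' Set.Ioo (0 : ℝ) r ∩ N))
        ^ ((1 : ℝ) / n) *
      (@Measure.hausdorffMeasure M g.toEMetricSpace ms hborel (n : ℝ)
          ((fun x => @Metric.infDist M g0.toPseudoMetricSpace x D) ⁻¹' Set.Ioo (0 : ℝ) r ∩ N))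
        ^ (((n : ℝ) - 1) / n) := by
  have hsc : @SecondCountableTopology M g.toUniformSpace.toTopologicalSpace := by
    let := g
    infer_instance
  have hN_meas : MeasurableSet N := by
    let := g
    exact hN.measurableSet
  have hle := @stmt_7_general M M g hsc ms hborel g0 ms hborel0 id (fun x => Real.exp (φ x)) _ n
    (by exact_mod_cast hn) .id (fun x => Real.exp_pos (φ x)) hconf
    (@Metric.lipschitz_infDist_pt M g0.toPseudoMetricSpace D) (Set.Ioo 0 r) measurableSet_Ioo N
    hN_meas
  rw [Set.image_id] at hle
  exact (lintegral_mono fun t => measure_mono (Set.inter_subset_inter_right _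
    (@interior_subset M g.toUniformSpace.toTopologicalSpace N))).trans hle
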